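/- arXiv:1612.00806 — 2 statements merged into one kernel-verified Lean document; each statement's English description precedes it below -/
import Mathlib

section
/- Let f : ℂ → ℝ be a three times continuously differentiable function with compact support, let n ≥ 1, and let λ ∈ ℂ with 𝛌 = (λ, …, λ) ∈ ℂ^{n+1} the diagonal point. Then for all indices 2 ≤ r < s ≤ n+1: (∂_s ∂̄_r Υ_0^{n+1}[f])(𝛌) = ∂f(λ) · ∂̄f(λ) · f(λ)^{n−1} · Σ_{k ⊢ n+1} Υ_0(k) · k_r k_s · 1_{s ≤ ℓ(k)}; and for all 2 ≤ r ≤ n+1: (∂_r ∂̄_r Υ_0^{n+1}[f])(𝛌) = ∂f(λ) · ∂̄f(λ) · f(λ)^{n−1} · Σ_{k ⊢ n+1} Υ_0(k) · k_r(k_r − 1) · 1_{r ≤ ℓ(k)} + Δf(λ) · f(λ)^n · Σ_{k ⊢ n+1} Υ_0(k) · k_r · 1_{r ≤ ℓ(k)}. Here k_r denotes the r-th part of the composition k (only defined when r ≤ ℓ(k)). -/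
open Complex Finset

noncomputable section

/-- The multinomial coefficient `M(k)` of a composition, as a complex number. -/
def compM {m : ℕ} (c : Composition m) : ℂ :=
  (Nat.factorial m : ℂ) / ∏ j : Fin c.length, (Nat.factorial (c.blocksFun j) : ℂ)

/-- `Υ₀(k) = (-1)^{ℓ(k)} M(k)/ℓ(k)`. -/
def Upsilon0 {m : ℕ} (c : Composition m) : ℂ :=
  ((-1 : ℂ) ^ c.length / (c.length : ℂ)) * compM c

/-- `Υ₀^m[f](z₁, …, z_m) = Σ_{k ⊢ m} Υ₀(k) Π_{j=1}^{ℓ(k)} f(z_j)^{k_j}`. -/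
def Upsilon0Fun {m : ℕ} (f : ℂ → ℝ) (z : Fin m → ℂ) : ℂ :=
  ∑ c : Composition m,
    Upsilon0 c * ∏ j : Fin c.length,
      ((f (z (Fin.castLE c.length_le j)) : ℂ)) ^ (c.blocksFun j)

/-- The `r`-th part (1-based) of a composition, as a complex number
(`0` if out of range; only used for `r ≤ ℓ(k)` below). -/
def compPart {m : ℕ} (c : Composition m) (r : ℕ) : ℂ :=
  (c.blocks.getD (r - 1) 0 : ℂ)

/-- Wirtinger derivative `∂_j = (∂_{x_j} − i ∂_{y_j})/2` in the `j`-th coordinate of `ℂᵐ`. -/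
def wD {m : ℕ} (j : Fin m) (F : (Fin m → ℂ) → ℂ) (w : Fin m → ℂ) : ℂ :=
  (fderiv ℝ F w (Pi.single j 1) - Complex.I * fderiv ℝ F w (Pi.single j Complex.I)) / 2

/-- Wirtinger derivative `∂̄_j = (∂_{x_j} + i ∂_{y_j})/2` in the `j`-th coordinate of `ℂᵐ`. -/
def wDbar {m : ℕ} (j : Fin m) (F : (Fin m → ℂ) → ℂ) (w : Fin m → ℂ) : ℂ :=
  (fderiv ℝ F w (Pi.single j 1) + Complex.I * fderiv ℝ F w (Pi.single j Complex.I)) / 2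

/-- One-variable Wirtinger derivative `∂ = (∂_x − i ∂_y)/2`. -/
def wD1 (g : ℂ → ℂ) (z : ℂ) : ℂ :=
  (fderiv ℝ g z 1 - Complex.I * fderiv ℝ g z Complex.I) / 2

/-- One-variable Wirtinger derivative `∂̄ = (∂_x + i ∂_y)/2`. -/
def wDbar1 (g : ℂ → ℂ) (z : ℂ) : ℂ :=
  (fderiv ℝ g z 1 + Complex.I * fderiv ℝ g z Complex.I) / 2

lemma ups_fderiv_prod {m : ℕ} (h : Fin m → ℂ → ℂ) (hd : ∀ j, Differentiable ℝ (h j))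
    (w : Fin m → ℂ) (r : Fin m) (v : ℂ) :
    fderiv ℝ (fun z : Fin m → ℂ => ∏ j, h j (z j)) w (Pi.single r v)
      = fderiv ℝ (h r) (w r) v * ∏ j ∈ univ.erase r, h j (w j) := by
  have key : ∀ i ∈ (univ : Finset (Fin m)), HasFDerivAt (fun z : Fin m → ℂ => h i (z i))
      ((fderiv ℝ (h i) (w i)).comp (ContinuousLinearMap.proj (R := ℝ) (φ := fun _ : Fin m => ℂ) i)) w := by
    intro i _
    exact HasFDerivAt.comp w (hd i (w i)).hasFDerivAt
      (ContinuousLinearMap.proj (R := ℝ) (φ := fun _ : Fin m => ℂ) i).hasFDerivAt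
  rw [(HasFDerivAt.finsetProd key).fderiv]
  simp only [_root_.sum_apply, _root_.smul_apply,
    ContinuousLinearMap.comp_apply, ContinuousLinearMap.proj_apply, smul_eq_mul]
  rw [Finset.sum_eq_single r]
  · simp [mul_comm]
  · intro b _ hb
    simp [Pi.single_eq_of_ne hb]
  · simp

lemma ups_diff_prod {m : ℕ} (h : Fin m → ℂ → ℂ) (hd : ∀ j, Differentiable ℝ (h j)) :
    Differentiable ℝ (fun z : Fin m → ℂ => ∏ j, h j (z j)) := by
  have : ∀ j, Differentiable ℝ (fun z : Fin m → ℂ => h j (z j)) := fun j =>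
    (hd j).comp (differentiable_apply j)
  fun_prop

lemma ups_prod_update {m : ℕ} (h : Fin m → ℂ → ℂ) (w : Fin m → ℂ) (r : Fin m) (g : ℂ → ℂ) :
    ∏ j, (Function.update h r g) j (w j) = g (w r) * ∏ j ∈ univ.erase r, h j (w j) := by
  rw [← Finset.mul_prod_erase _ _ (mem_univ r)]
  congr 1
  · simp
  · apply Finset.prod_congr rfl
    intro j hj
    rw [Function.update_of_ne (Finset.ne_of_mem_erase hj)]

lemma ups_wDbar_sum {m : ℕ} {ι : Type*} [Fintype ι] (a : ι → ℂ) (h : ι → Fin m → ℂ → ℂ)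
    (hd : ∀ c j, Differentiable ℝ (h c j)) (r : Fin m) :
    wDbar r (fun z => ∑ c, a c * ∏ j, h c j (z j))
      = fun z => ∑ c, a c * ∏ j, (Function.update (h c) r (wDbar1 (h c r))) j (z j) := by
  funext w
  have hp := fun c => ups_diff_prod (h c) (hd c) w
  unfold wDbar
  rw [fderiv_fun_sum (fun c _ => (hp c).const_mul (a c))]
  simp only [fderiv_const_mul (hp _), _root_.sum_apply,
    _root_.smul_apply, ups_fderiv_prod _ (hd _), ups_prod_update, wDbar1, smul_eq_mul]
  rw [Finset.mul_sum, ← Finset.sum_add_distrib, Finset.sum_div]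
  exact Finset.sum_congr rfl fun c _ => by ring

lemma ups_wD_sum {m : ℕ} {ι : Type*} [Fintype ι] (a : ι → ℂ) (h : ι → Fin m → ℂ → ℂ)
    (hd : ∀ c j, Differentiable ℝ (h c j)) (r : Fin m) :
    wD r (fun z => ∑ c, a c * ∏ j, h c j (z j))
      = fun z => ∑ c, a c * ∏ j, (Function.update (h c) r (wD1 (h c r))) j (z j) := by
  funext w
  have hp := fun c => ups_diff_prod (h c) (hd c) w
  unfold wD
  rw [fderiv_fun_sum (fun c _ => (hp c).const_mul (a c))]
  simp only [fderiv_const_mul (hp _), _root_.sum_apply,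
    _root_.smul_apply, ups_fderiv_prod _ (hd _), ups_prod_update, wD1, smul_eq_mul]
  rw [Finset.mul_sum, ← Finset.sum_sub_distrib, Finset.sum_div]
  exact Finset.sum_congr rfl fun c _ => by ring

lemma ups_wDbar1_pow (g : ℂ → ℂ) (hg : Differentiable ℝ g) (e : ℕ) :
    wDbar1 (fun z => g z ^ e) = fun z => ((e : ℂ) * g z ^ (e - 1)) * wDbar1 g z := by
  funext z
  simp only [wDbar1, fderiv_fun_pow e (hg z)]
  simp
  ring

lemma ups_wD1_pow (g : ℂ → ℂ) (hg : Differentiable ℝ g) (e : ℕ) :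
    wD1 (fun z => g z ^ e) = fun z => ((e : ℂ) * g z ^ (e - 1)) * wD1 g z := by
  funext z
  simp only [wD1, fderiv_fun_pow e (hg z)]
  simp
  ring

lemma ups_wD1_mul (g h : ℂ → ℂ) (hg : Differentiable ℝ g) (hh : Differentiable ℝ h) (z : ℂ) :
    wD1 (fun z => g z * h z) z = wD1 g z * h z + g z * wD1 h z := by
  simp only [wD1, fderiv_fun_mul (hg z) (hh z)]
  simp
  ring

lemma ups_wD1_const_mul (a : ℂ) (g : ℂ → ℂ) (hg : Differentiable ℝ g) (z : ℂ) :
    wD1 (fun z => a * g z) z = a * wD1 g z := by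
  simp only [wD1, fderiv_const_mul (hg z)]
  simp
  ring

lemma ups_diff_wDbar1 (g : ℂ → ℂ) (hg : ContDiff ℝ 3 g) : Differentiable ℝ (wDbar1 g) := by
  have h1 : Differentiable ℝ (fderiv ℝ g) :=
    (hg.fderiv_right (m := 2) (by norm_num)).differentiable (by norm_num)
  unfold wDbar1
  fun_prop

/-- exponent of the `j`-th variable -/
def upsE {m : ℕ} (c : Composition m) (j : Fin m) : ℕ := c.blocks.getD j 0

lemma ups_prod_extend {m : ℕ} (c : Composition m) {M : Type*} [CommMonoid M]
    (F : Fin m → ℕ → M) (hF : ∀ j, F j 0 = 1) :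
    ∏ j : Fin c.length, F (Fin.castLE c.length_le j) (c.blocksFun j) = ∏ j : Fin m, F j (upsE c j) := by
  have h1 : ∀ j : Fin c.length, c.blocksFun j = upsE c (Fin.castLE c.length_le j) := by
    intro j
    have := j.2
    simp [upsE, Composition.blocksFun]
  simp only [h1]
  refine (Finset.prod_map univ (Fin.castLEEmb c.length_le) (fun j => F j (upsE c j))).symm.trans ?_
  apply Finset.prod_subset (Finset.subset_univ _)
  intro j _ hj
  have : c.length ≤ j := by
    by_contra hlt
    push Not at hlt
    exact hj (Finset.mem_map.2 ⟨⟨j, hlt⟩, mem_univ _, by ext; simp⟩)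
  have h0 : upsE c j = 0 := by
    unfold upsE
    exact List.getD_eq_default _ _ this
  rw [h0, hF]

lemma ups_sum {m : ℕ} (c : Composition m) : ∑ j, upsE c j = m := by
  have := ups_prod_extend c (M := Multiplicative ℕ) (fun _ k => Multiplicative.ofAdd k) (fun _ => rfl)
  have h2 : ∑ j : Fin c.length, c.blocksFun j = ∑ j, upsE c j := this
  rw [← h2, c.sum_blocksFun]

lemma ups_fun {m : ℕ} (f : ℂ → ℝ) :
    (Upsilon0Fun f : (Fin m → ℂ) → ℂ) = fun z => ∑ c : Composition m, Upsilon0 c *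
      ∏ j, (fun (j : Fin m) (x : ℂ) => (f x : ℂ) ^ upsE c j) j (z j) := by
  funext z
  unfold Upsilon0Fun
  refine Finset.sum_congr rfl fun c _ => ?_
  rw [ups_prod_extend c (fun j k => (f (z j) : ℂ) ^ k) (fun j => pow_zero _)]

lemma ups_part {m : ℕ} (c : Composition m) (r : ℕ) (h : r - 1 < m) :
    compPart c r = (upsE c ⟨r - 1, h⟩ : ℂ) := rfl

lemma ups_zero {m : ℕ} (c : Composition m) (r : ℕ) (hr : 2 ≤ r) (h : r - 1 < m)
    (hl : ¬ r ≤ c.length) : upsE c ⟨r - 1, h⟩ = 0 :=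
  List.getD_eq_default _ _ (by
    have hl2 : ¬ r ≤ c.blocks.length := hl
    show c.blocks.length ≤ r - 1
    omega)

/-- mixed Wirtinger derivatives of `Υ₀^{n+1}[f]` at a diagonal point
`(λ, …, λ)` (coordinates indexed `1, …, n+1`; coordinate `r` is the `(r−1)`-th in
0-based indexing). -/
theorem upsilon_diagonal_derivatives
    (f : ℂ → ℝ) (hf : ContDiff ℝ 3 f) (hsupp : HasCompactSupport f)
    (n : ℕ) (hn : 1 ≤ n) (lam : ℂ) :
    (∀ (r s : ℕ) (hr : 2 ≤ r) (hrs : r < s) (hs : s ≤ n + 1),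
      wD (⟨s - 1, by omega⟩ : Fin (n + 1))
          (wDbar (⟨r - 1, by omega⟩ : Fin (n + 1)) (Upsilon0Fun f))
          (fun _ => lam)
        = wD1 (fun w => (f w : ℂ)) lam * wDbar1 (fun w => (f w : ℂ)) lam *
            (f lam : ℂ) ^ (n - 1) *
            ∑ c : Composition (n + 1), Upsilon0 c *
              (if s ≤ c.length then compPart c r * compPart c s else 0)) ∧
    (∀ (r : ℕ) (hr : 2 ≤ r) (hr2 : r ≤ n + 1),
      wD (⟨r - 1, by omega⟩ : Fin (n + 1))
          (wDbar (⟨r - 1, by omega⟩ : Fin (n + 1)) (Upsilon0Fun f))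
          (fun _ => lam)
        = wD1 (fun w => (f w : ℂ)) lam * wDbar1 (fun w => (f w : ℂ)) lam *
            (f lam : ℂ) ^ (n - 1) *
            (∑ c : Composition (n + 1), Upsilon0 c *
              (if r ≤ c.length then compPart c r * (compPart c r - 1) else 0))
          + wD1 (wDbar1 (fun w => (f w : ℂ))) lam * (f lam : ℂ) ^ n *
            ∑ c : Composition (n + 1), Upsilon0 c *
              (if r ≤ c.length then compPart c r else 0)) := by
  have hg : ContDiff ℝ 3 (fun w => (f w : ℂ)) := Complex.ofRealCLM.contDiff.comp hf
  have hgd : Differentiable ℝ (fun w => (f w : ℂ)) := hg.differentiable (by norm_num)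
  set g : ℂ → ℂ := fun w => (f w : ℂ) with hgdef
  have hbar := ups_diff_wDbar1 g hg
  have hpow : ∀ e : ℕ, Differentiable ℝ (fun x => g x ^ e) := fun e => hgd.pow e
  have hpb : ∀ e : ℕ, Differentiable ℝ (wDbar1 (fun x => g x ^ e)) := by
    intro e
    rw [ups_wDbar1_pow g hgd]
    exact ((hpow _).const_mul _).mul hbar
  have hfun := ups_fun (m := n + 1) f
  have hd1 : ∀ (r : Fin (n + 1)) (c : Composition (n + 1)) (j : Fin (n + 1)), Differentiable ℝ
      ((Function.update (fun (j : Fin (n + 1)) (x : ℂ) => g x ^ upsE c j) r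
        (wDbar1 (fun x => g x ^ upsE c r))) j) := by
    intro r c j
    by_cases hj : j = r
    · subst hj; simpa using hpb _
    · rw [Function.update_of_ne hj]; exact hpow _
  have hb : ∀ r : Fin (n + 1), wDbar r (Upsilon0Fun f) = _ := fun r =>
    (congrArg (wDbar r) hfun).trans (ups_wDbar_sum (fun c : Composition (n + 1) => Upsilon0 c)
      (fun c (j : Fin (n + 1)) (x : ℂ) => g x ^ upsE c j) (fun c j => hpow _) r)
  have hfin : ∀ r s : Fin (n + 1), wD s (wDbar r (Upsilon0Fun f)) = _ := fun r s =>
    (congrArg (wD s) (hb r)).trans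
      (ups_wD_sum (fun c : Composition (n + 1) => Upsilon0 c) _ (fun c j => hd1 r c j) s)
  refine ⟨?_, ?_⟩
  · intro r s hr hrs hs
    rw [hfin, Finset.mul_sum]
    refine Finset.sum_congr rfl fun c _ => ?_
    have hr' : r - 1 < n + 1 := by omega
    have hs' : s - 1 < n + 1 := by omega
    rw [ups_part c r hr', ups_part c s hs']
    have hne : (⟨s - 1, hs'⟩ : Fin (n + 1)) ≠ ⟨r - 1, hr'⟩ := by
      intro h; simp only [Fin.mk.injEq] at h; omega
    have hz := ups_zero c s (by omega) hs'
    generalize (⟨s - 1, hs'⟩ : Fin (n + 1)) = S at *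
    generalize (⟨r - 1, hr'⟩ : Fin (n + 1)) = R at *
    rw [ups_prod_update]
    have hmem : R ∈ univ.erase S := Finset.mem_erase.2 ⟨hne.symm, mem_univ _⟩
    rw [← Finset.mul_prod_erase _ _ hmem, Function.update_self, Function.update_of_ne hne]
    have hrest : ∏ x ∈ (univ.erase S).erase R,
        Function.update (fun (j : Fin (n + 1)) (x : ℂ) => g x ^ upsE c j) R
          (wDbar1 (fun x => g x ^ upsE c R)) x lam
        = g lam ^ (∑ x ∈ (univ.erase S).erase R, upsE c x) := by
      rw [← Finset.prod_pow_eq_pow_sum]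
      refine Finset.prod_congr rfl fun j hj => ?_
      rw [Function.update_of_ne (Finset.ne_of_mem_erase hj)]
    rw [hrest, ups_wDbar1_pow g hgd, ups_wD1_pow g hgd]
    have hsum := ups_sum c
    rw [← Finset.add_sum_erase _ _ (mem_univ S), ← Finset.add_sum_erase _ _ hmem] at hsum
    generalize (∑ x ∈ (univ.erase S).erase R, upsE c x) = T at *
    change _ = _ * g lam ^ (n - 1) * _
    have hif : (if s ≤ c.length then (upsE c R : ℂ) * (upsE c S : ℂ) else 0)
        = (upsE c R : ℂ) * (upsE c S : ℂ) := by
      split_ifs with h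
      · rfl
      · simp [hz h]
    rw [hif]
    generalize upsE c R = a at *
    generalize upsE c S = b at *
    rcases a with _ | a
    · simp
    rcases b with _ | b
    · simp
    have hn1 : n - 1 = a + b + T := by omega
    rw [hn1]
    simp only [Nat.add_sub_cancel, pow_add]
    ring
  · intro r hr hr2
    rw [hfin, Finset.mul_sum, Finset.mul_sum, ← Finset.sum_add_distrib]
    refine Finset.sum_congr rfl fun c _ => ?_
    have hr' : r - 1 < n + 1 := by omega
    rw [ups_part c r hr']
    have hz := ups_zero c r hr hr'
    generalize (⟨r - 1, hr'⟩ : Fin (n + 1)) = R at *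
    rw [ups_prod_update, Function.update_self]
    have hrest : ∏ x ∈ univ.erase R,
        Function.update (fun (j : Fin (n + 1)) (x : ℂ) => g x ^ upsE c j) R
          (wDbar1 (fun x => g x ^ upsE c R)) x lam
        = g lam ^ (∑ x ∈ univ.erase R, upsE c x) := by
      rw [← Finset.prod_pow_eq_pow_sum]
      refine Finset.prod_congr rfl fun j hj => ?_
      rw [Function.update_of_ne (Finset.ne_of_mem_erase hj)]
    rw [hrest, ups_wDbar1_pow g hgd,
      ups_wD1_mul _ _ ((hpow _).const_mul _) hbar, ups_wD1_const_mul _ _ (hpow _),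
      ups_wD1_pow g hgd]
    have hsum := ups_sum c
    rw [← Finset.add_sum_erase _ _ (mem_univ R)] at hsum
    generalize (∑ x ∈ univ.erase R, upsE c x) = T at *
    change _ = _ * g lam ^ (n - 1) * _ + _ * g lam ^ n * _
    have hif : (if r ≤ c.length then (upsE c R : ℂ) * ((upsE c R : ℂ) - 1) else 0)
        = (upsE c R : ℂ) * ((upsE c R : ℂ) - 1) := by
      split_ifs with h
      · rfl
      · simp [hz h]
    have hif2 : (if r ≤ c.length then (upsE c R : ℂ) else 0) = (upsE c R : ℂ) := by
      split_ifs with h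
      · rfl
      · simp [hz h]
    rw [hif, hif2]
    generalize upsE c R = a at *
    rcases a with _ | a
    · simp
    have hn0 : n = a + T := by omega
    rcases a with _ | a
    · have hT : T = n := by omega
      rw [hT]; simp; ring
    have hn1 : n - 1 = a + T := by omega
    have hgn : g lam ^ n = g lam ^ (a + 1 + T) := congrArg (fun k => g lam ^ k) hn0
    rw [hn1, hgn]
    simp only [Nat.add_sub_cancel, pow_add]
    push_cast
    ring
end
end

section
/- Let f : ℂ → ℝ be a three times continuously differentiable function with compact support and let n ≥ 1. Then Σ_{2 ≤ r ≤ s ≤ n+1} ∫_ℂ (∂_s ∂̄_r Υ_0^{n+1}[f])(λ, …, λ) dA(λ) = −𝒴_{n+1} · ∫_ℂ ∂f(λ) · ∂̄f(λ) · f(λ)^{n−1} dA(λ), where the integrand on the left is the mixed Wirtinger derivative of Υ_0^{n+1}[f] evaluated at the diagonal point (λ, …, λ) ∈ ℂ^{n+1}. In particular, by the values of 𝒴_{n+1}, the left-hand side equals −∫_ℂ ∂f ∂̄f dA when n = 1 and equals 0 for all n ≥ 2. -/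
open Complex Finset MeasureTheory

noncomputable section

/-- The measure `dA` on `ℂ`: `(1/π)` times Lebesgue measure. -/
def dA : Measure ℂ := (ENNReal.ofReal Real.pi)⁻¹ • (volume : Measure ℂ)

/-- `𝒴_m = −Σ_{k ⊢ m} Υ₀(k) [ Σ_{2 ≤ r < s ≤ ℓ(k)} k_r k_s + Σ_{r=2}^{ℓ(k)} k_r (k_r − m) ]`. -/
def Yval (m : ℕ) : ℂ :=
  -∑ c : Composition m, Upsilon0 c *
      ((∑ r ∈ Icc 2 c.length, ∑ s ∈ Icc (r + 1) c.length,
          compPart c r * compPart c s) +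
        ∑ r ∈ Icc 2 c.length, compPart c r * (compPart c r - (m : ℂ)))

/-- generic multi-variable Wirtinger operator -/
def wE {m : ℕ} (e : ℂ) (j : Fin m) (F : (Fin m → ℂ) → ℂ) (w : Fin m → ℂ) : ℂ :=
  (fderiv ℝ F w (Pi.single j 1) + e * fderiv ℝ F w (Pi.single j Complex.I)) / 2

/-- generic one-variable Wirtinger operator -/
def wE1 (e : ℂ) (g : ℂ → ℂ) (z : ℂ) : ℂ :=
  (fderiv ℝ g z 1 + e * fderiv ℝ g z Complex.I) / 2

lemma wD_eq {m : ℕ} (j : Fin m) (F : (Fin m → ℂ) → ℂ) : wD j F = wE (-Complex.I) j F := by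
  funext w; simp [wD, wE, sub_eq_add_neg]

lemma wDbar_eq {m : ℕ} (j : Fin m) (F : (Fin m → ℂ) → ℂ) : wDbar j F = wE Complex.I j F := rfl

lemma wD1_eq (g : ℂ → ℂ) : wD1 g = wE1 (-Complex.I) g := by
  funext w; simp [wD1, wE1, sub_eq_add_neg]

lemma wDbar1_eq (g : ℂ → ℂ) : wDbar1 g = wE1 Complex.I g := rfl

lemma diff_prodFun {m : ℕ} (h : Fin m → ℂ → ℂ) (hh : ∀ j, Differentiable ℝ (h j)) :
    Differentiable ℝ (fun z : Fin m → ℂ => ∏ j, h j (z j)) := by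
  have : ∀ j, Differentiable ℝ (fun z : Fin m → ℂ => h j (z j)) := fun j =>
    (hh j).comp (differentiable_apply j)
  fun_prop

lemma fderiv_prodFun {m : ℕ} (h : Fin m → ℂ → ℂ) (hh : ∀ j, Differentiable ℝ (h j))
    (ρ : Fin m) (w : Fin m → ℂ) (v : ℂ) :
    fderiv ℝ (fun z : Fin m → ℂ => ∏ j, h j (z j)) w (Pi.single ρ v)
      = (∏ j ∈ univ.erase ρ, h j (w j)) * fderiv ℝ (h ρ) (w ρ) v := by
  have h1 : ∀ j ∈ (univ : Finset (Fin m)), HasFDerivAt (fun z : Fin m → ℂ => h j (z j))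
      ((fderiv ℝ (h j) (w j)).comp (ContinuousLinearMap.proj (R := ℝ) j)) w := by
    intro j _
    exact ((hh j) (w j)).hasFDerivAt.comp w (hasFDerivAt_apply j w)
  rw [(HasFDerivAt.finsetProd h1).fderiv]
  simp only [_root_.sum_apply, smul_apply,
    ContinuousLinearMap.comp_apply, ContinuousLinearMap.proj_apply, smul_eq_mul]
  rw [Finset.sum_eq_single ρ]
  · simp
  · intro b _ hb
    simp [Pi.single_eq_of_ne hb]
  · simp

lemma wE_prodFun {m : ℕ} (e : ℂ) (h : Fin m → ℂ → ℂ) (hh : ∀ j, Differentiable ℝ (h j))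
    (ρ : Fin m) :
    wE e ρ (fun z : Fin m → ℂ => ∏ j, h j (z j))
      = fun w => ∏ j, (Function.update h ρ (wE1 e (h ρ))) j (w j) := by
  funext w
  rw [wE, fderiv_prodFun h hh, fderiv_prodFun h hh, ← Finset.mul_prod_erase univ _ (mem_univ ρ)]
  have : ∏ j ∈ univ.erase ρ, (Function.update h ρ (wE1 e (h ρ))) j (w j)
      = ∏ j ∈ univ.erase ρ, h j (w j) := by
    apply Finset.prod_congr rfl
    intro j hj
    rw [Function.update_of_ne (Finset.ne_of_mem_erase hj)]
  rw [this, Function.update_self, wE1]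
  ring

lemma wE_sum {m : ℕ} {ι : Type*} [Fintype ι] (e : ℂ) (u : ι → ℂ) (F : ι → (Fin m → ℂ) → ℂ)
    (hF : ∀ c, Differentiable ℝ (F c)) (ρ : Fin m) :
    wE e ρ (fun z => ∑ c, u c * F c z) = fun w => ∑ c, u c * wE e ρ (F c) w := by
  funext w
  have h1 : HasFDerivAt (fun z => ∑ c, u c * F c z) (∑ c, u c • fderiv ℝ (F c) w) w := by
    apply HasFDerivAt.fun_sum
    intro c _
    exact ((hF c) w).hasFDerivAt.const_mul (u c)
  rw [wE, h1.fderiv]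
  simp only [_root_.sum_apply, smul_apply, smul_eq_mul, wE]
  rw [Finset.mul_sum, ← Finset.sum_add_distrib, Finset.sum_div]
  apply Finset.sum_congr rfl
  intro c _
  ring

lemma wE1_mul (e : ℂ) (g h : ℂ → ℂ) (hg : Differentiable ℝ g) (hh : Differentiable ℝ h) (z : ℂ) :
    wE1 e (fun x => g x * h x) z = wE1 e g z * h z + g z * wE1 e h z := by
  have := ((hg z).hasFDerivAt.mul (hh z).hasFDerivAt).fderiv
  simp only [wE1]
  rw [show (fun x => g x * h x) = g * h from rfl, this]
  simp
  ring

lemma wE1_pow (e : ℂ) (g : ℂ → ℂ) (hg : Differentiable ℝ g) (a : ℕ) (z : ℂ) :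
    wE1 e (fun x => g x ^ a) z = a * g z ^ (a - 1) * wE1 e g z := by
  have := ((hg z).hasFDerivAt.pow a).fderiv
  simp only [wE1]
  rw [this]
  simp
  ring

lemma wE1_const_mul (e k : ℂ) (g : ℂ → ℂ) (hg : Differentiable ℝ g) (z : ℂ) :
    wE1 e (fun x => k * g x) z = k * wE1 e g z := by
  rw [wE1_mul e (fun _ => k) g (by fun_prop) hg]
  simp [wE1]

lemma wE1_contDiff (e : ℂ) (g : ℂ → ℂ) (k : ℕ) (hg : ContDiff ℝ (k + 1 : ℕ) g) :
    ContDiff ℝ k (wE1 e g) := by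
  have h : ∀ v, ContDiff ℝ k (fun z => fderiv ℝ g z v) := fun v =>
    (hg.fderiv_right (m := k) (by norm_cast)).clm_apply contDiff_const
  unfold wE1
  exact ((h 1).add (contDiff_const.mul (h I))).div_const 2

lemma wE1_supp (e : ℂ) (g : ℂ → ℂ) (hg : HasCompactSupport g) :
    HasCompactSupport (wE1 e g) := by
  have h : ∀ z, fderiv ℝ g z = 0 → wE1 e g z = 0 := by
    intro z hz; simp [wE1, hz]
  exact (hg.fderiv (𝕜 := ℝ)).mono (fun z hz hz' => hz (h z hz'))

instance dA_haar : Measure.IsAddHaarMeasure dA := by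
  unfold dA
  apply Measure.IsAddHaarMeasure.smul (volume : Measure ℂ)
  · simp
  · simp [Real.pi_pos]

lemma int_fderiv (F : ℂ → ℂ) (hF : ContDiff ℝ 1 F) (hs : HasCompactSupport F) (v : ℂ) :
    Integrable (fun z => fderiv ℝ F z v) dA ∧ ∫ z, fderiv ℝ F z v ∂dA = 0 := by
  have hc : Continuous (fun z => fderiv ℝ F z v) :=
    (hF.continuous_fderiv (by norm_num)).clm_apply continuous_const
  have hi : Integrable (fun z => fderiv ℝ F z v) dA :=
    hc.integrable_of_hasCompactSupport (hs.fderiv_apply (𝕜 := ℝ) v)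
  refine ⟨hi, ?_⟩
  have := integral_mul_fderiv_eq_neg_fderiv_mul_of_integrable (μ := dA) (𝕜 := ℂ)
    (f := fun _ => (1:ℂ)) (g := F) (v := v) (by simp) (by simpa using hi)
    (by simpa using hF.continuous.integrable_of_hasCompactSupport hs)
    (by intros; fun_prop) (fun x _ => (hF.differentiable (by norm_num)) x)
  simpa using this

lemma int_wE1 (e : ℂ) (F : ℂ → ℂ) (hF : ContDiff ℝ 1 F) (hs : HasCompactSupport F) :
    ∫ z, wE1 e F z ∂dA = 0 := by
  obtain ⟨a1, b1⟩ := int_fderiv F hF hs 1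
  obtain ⟨a2, b2⟩ := int_fderiv F hF hs I
  unfold wE1
  rw [integral_div, integral_add a1 (a2.const_mul e), integral_const_mul, b1, b2]
  simp

/-- the parts of a composition, zero-based and padded by zero -/
def prt {m : ℕ} (c : Composition m) (j : ℕ) : ℕ := c.blocks.getD j 0

lemma prt_castLE {m : ℕ} (c : Composition m) (j : Fin c.length) :
    prt c (Fin.castLE c.length_le j : Fin m) = c.blocksFun j := by
  simp [prt, Composition.blocksFun]

lemma prt_zero {m : ℕ} (c : Composition m) (j : ℕ) (hj : c.length ≤ j) : prt c j = 0 := by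
  unfold prt
  exact List.getD_eq_default _ _ hj

lemma prt_zero' {m : ℕ} (c : Composition m) (i : Fin m)
    (hi : i ∉ (Fin.castLE c.length_le) '' ((univ : Finset (Fin c.length)) : Set (Fin c.length))) :
    prt c i = 0 := by
  apply prt_zero
  by_contra hlt
  push Not at hlt
  exact hi ⟨⟨i, hlt⟩, by simp, by ext; simp⟩

lemma prt_sum {m : ℕ} (c : Composition m) : ∑ j : Fin m, prt c j = m := by
  conv_rhs => rw [← c.sum_blocksFun]
  symm
  apply Finset.sum_of_injOn (Fin.castLE c.length_le)
  · exact (Fin.castLE_injective _).injOn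
  · intro x _; simp
  · intro i _ hi
    exact prt_zero' c i hi
  · intro i _
    exact (prt_castLE c i).symm

lemma upsilon_eq {m : ℕ} (f : ℂ → ℝ) :
    (Upsilon0Fun f : (Fin m → ℂ) → ℂ) =
      fun z => ∑ c : Composition m, Upsilon0 c * ∏ j : Fin m, ((f (z j) : ℂ)) ^ (prt c j) := by
  funext z
  unfold Upsilon0Fun
  apply Finset.sum_congr rfl
  intro c _
  congr 1
  apply Finset.prod_of_injOn (Fin.castLE c.length_le)
  · exact (Fin.castLE_injective _).injOn
  · intro x _; simp
  · intro i _ hi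
    rw [prt_zero' c i hi, pow_zero]
  · intro i _
    rw [prt_castLE]

/-- second derivative of a product of powers, off-diagonal -/
lemma second_off {m : ℕ} (g : ℂ → ℂ) (hg : ContDiff ℝ 3 g) (a : Fin m → ℕ) (ha : ∑ j, a j = m)
    (e e' : ℂ) (ρ σ : Fin m) (hne : ρ ≠ σ) (lam : ℂ) :
    ∏ j, (Function.update (Function.update (fun j x => g x ^ a j) ρ
        (wE1 e (fun x => g x ^ a ρ))) σ
        (wE1 e' ((Function.update (fun j x => g x ^ a j) ρ
        (wE1 e (fun x => g x ^ a ρ))) σ))) j lam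
      = (a ρ * a σ : ℂ) * (wE1 e' g lam * wE1 e g lam * g lam ^ (m - 2)) := by
  have hd : Differentiable ℝ g := hg.differentiable (by norm_num)
  have hρ : ρ ∈ univ.erase σ := by simp [hne]
  rw [← Finset.mul_prod_erase univ _ (mem_univ σ), ← Finset.mul_prod_erase _ _ hρ]
  rw [Function.update_self, Function.update_of_ne hne, Function.update_self,
    Function.update_of_ne hne.symm]
  have hr : ∏ x ∈ (univ.erase σ).erase ρ, (Function.update (Function.update (fun j x => g x ^ a j) ρ
        (wE1 e (fun x => g x ^ a ρ))) σ (wE1 e' (fun x => g x ^ a σ))) x lam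
      = g lam ^ (∑ x ∈ (univ.erase σ).erase ρ, a x) := by
    rw [← Finset.prod_pow_eq_pow_sum]
    apply Finset.prod_congr rfl
    intro j hj
    simp only [Finset.mem_erase] at hj
    rw [Function.update_of_ne hj.2.1, Function.update_of_ne hj.1]
  rw [hr, wE1_pow _ _ hd, wE1_pow _ _ hd]
  have hs : a σ + (a ρ + ∑ x ∈ (univ.erase σ).erase ρ, a x) = m := by
    rw [Finset.add_sum_erase _ _ hρ, Finset.add_sum_erase _ _ (mem_univ σ), ha]
  rcases Nat.eq_zero_or_pos (a ρ) with h0 | h0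
  · simp [h0]
  rcases Nat.eq_zero_or_pos (a σ) with h1 | h1
  · simp [h1]
  rw [show m - 2 = (a σ - 1) + ((a ρ - 1) + ∑ x ∈ (univ.erase σ).erase ρ, a x) by omega]
  ring

lemma second_diag {m : ℕ} (g : ℂ → ℂ) (hg : ContDiff ℝ 3 g) (a : Fin m → ℕ) (ha : ∑ j, a j = m)
    (e e' : ℂ) (ρ : Fin m) (lam : ℂ) :
    ∏ j, (Function.update (Function.update (fun j x => g x ^ a j) ρ
        (wE1 e (fun x => g x ^ a ρ))) ρ
        (wE1 e' ((Function.update (fun j x => g x ^ a j) ρ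
        (wE1 e (fun x => g x ^ a ρ))) ρ))) j lam
      = (a ρ * (a ρ - 1) : ℂ) * (wE1 e' g lam * wE1 e g lam * g lam ^ (m - 2))
        + a ρ * (g lam ^ (m - 1) * wE1 e' (wE1 e g) lam) := by
  have hd : Differentiable ℝ g := hg.differentiable (by norm_num)
  have hd2 : Differentiable ℝ (wE1 e g) :=
    (wE1_contDiff e g 2 (by exact_mod_cast hg)).differentiable (by norm_num)
  rw [← Finset.mul_prod_erase univ _ (mem_univ ρ)]
  rw [Function.update_self, Function.update_self]
  have hr : ∀ u : ℂ → ℂ, ∏ x ∈ univ.erase ρ, (Function.update (Function.update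
        (fun j x => g x ^ a j) ρ (wE1 e (fun x => g x ^ a ρ))) ρ u) x lam
      = g lam ^ (∑ x ∈ univ.erase ρ, a x) := by
    intro u
    rw [← Finset.prod_pow_eq_pow_sum]
    apply Finset.prod_congr rfl
    intro j hj
    simp only [Finset.mem_erase] at hj
    rw [Function.update_of_ne hj.1, Function.update_of_ne hj.1]
  have hs : a ρ + ∑ x ∈ univ.erase ρ, a x = m := by
    rw [Finset.add_sum_erase _ _ (mem_univ ρ), ha]
  rw [hr]
  have h1 : wE1 e (fun x => g x ^ a ρ) = fun x => (a ρ : ℂ) * (g x ^ (a ρ - 1) * wE1 e g x) := by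
    funext x
    rw [wE1_pow _ _ hd]; ring
  rw [h1, wE1_const_mul _ _ _ (by fun_prop), wE1_mul _ _ _ (by fun_prop) hd2, wE1_pow _ _ hd]
  rcases Nat.eq_zero_or_pos (a ρ) with h0 | h0
  · simp [h0]
  rw [show m - 1 = (a ρ - 1) + ∑ x ∈ univ.erase ρ, a x by omega]
  rcases Nat.eq_or_lt_of_le h0 with h1 | h1
  · simp [← h1]; ring
  rw [show m - 2 = (a ρ - 1 - 1) + ∑ x ∈ univ.erase ρ, a x by omega, Nat.cast_sub h0]
  push_cast
  ring

lemma parts (g : ℂ → ℂ) (hg : ContDiff ℝ 3 g) (hs : HasCompactSupport g) (e e' : ℂ) (n : ℕ)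
    (hn : 1 ≤ n) :
    Integrable (fun z => wE1 e' g z * wE1 e g z * g z ^ (n - 1)) dA ∧
    Integrable (fun z => g z ^ n * wE1 e' (wE1 e g) z) dA ∧
    ∫ z, g z ^ n * wE1 e' (wE1 e g) z ∂dA
      = -n * ∫ z, wE1 e' g z * wE1 e g z * g z ^ (n - 1) ∂dA := by
  have hd : Differentiable ℝ g := hg.differentiable (by norm_num)
  have hC : ∀ e, ContDiff ℝ 2 (wE1 e g) := fun e => wE1_contDiff e g 2 (by exact_mod_cast hg)
  have hC2 : ContDiff ℝ 1 (wE1 e' (wE1 e g)) :=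
    wE1_contDiff e' _ 1 (by exact_mod_cast hC e)
  have hS := wE1_supp e g hs
  have hS' := wE1_supp e' g hs
  have i1 : Integrable (fun z => wE1 e' g z * wE1 e g z * g z ^ (n - 1)) dA := by
    apply Continuous.integrable_of_hasCompactSupport
    · exact ((hC e').continuous.mul (hC e).continuous).mul (hg.continuous.pow _)
    · exact (hS'.mul_right (f' := wE1 e g)).mul_right (f' := fun z => g z ^ (n-1))
  have i2 : Integrable (fun z => g z ^ n * wE1 e' (wE1 e g) z) dA := by
    apply Continuous.integrable_of_hasCompactSupport
    · exact (hg.continuous.pow _).mul hC2.continuous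
    · exact (wE1_supp e' _ hS).mul_left (f := fun z => g z ^ n)
  refine ⟨i1, i2, ?_⟩
  have h0 := int_wE1 e' (fun z => g z ^ n * wE1 e g z)
    (((hg.of_le (by norm_num)).pow n).mul ((hC e).of_le (by norm_num)))
    (hS.mul_left (f := fun z => g z ^ n))
  have h1 : ∀ z, wE1 e' (fun z => g z ^ n * wE1 e g z) z =
      n * (wE1 e' g z * wE1 e g z * g z ^ (n - 1)) + g z ^ n * wE1 e' (wE1 e g) z := by
    intro z
    rw [wE1_mul _ _ _ (by fun_prop) ((hC e).differentiable (by norm_num)), wE1_pow _ _ hd]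
    ring
  simp_rw [h1] at h0
  rw [integral_add (i1.const_mul _) i2, integral_const_mul] at h0
  linear_combination h0

/-- coefficient -/
def coef {m : ℕ} (c : Composition m) (r s : ℕ) : ℂ :=
  if r = s then (prt c r : ℂ) * ((prt c r : ℂ) - m) else (prt c r : ℂ) * prt c s

lemma integral_pair_ups (f : ℂ → ℝ) (hf : ContDiff ℝ 3 f) (hsupp : HasCompactSupport f)
    (n : ℕ) (hn : 1 ≤ n) (σ ρ : Fin (n + 1)) :
    ∫ lam : ℂ, wD σ (wDbar ρ (Upsilon0Fun f)) (fun _ => lam) ∂dA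
      = (∑ c : Composition (n + 1), Upsilon0 c * coef c ρ σ) *
        ∫ lam : ℂ, wD1 (fun w => (f w : ℂ)) lam * wDbar1 (fun w => (f w : ℂ)) lam *
            (f lam : ℂ) ^ (n - 1) ∂dA := by
  set g : ℂ → ℂ := fun w => (f w : ℂ) with hgdef
  have hg : ContDiff ℝ 3 g := Complex.ofRealCLM.contDiff.comp hf
  have hgs : HasCompactSupport g := hsupp.comp_left (g := fun x : ℝ => (x : ℂ)) (by simp)
  have hd : Differentiable ℝ g := hg.differentiable (by norm_num)
  obtain ⟨i1, i2, hI⟩ := parts g hg hgs I (-I) n hn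
  rw [wDbar_eq, wD_eq, wD1_eq, wDbar1_eq, upsilon_eq]
  have hd1 : ∀ c : Composition (n + 1), ∀ j : Fin (n + 1),
      Differentiable ℝ ((fun (j : Fin (n + 1)) x => g x ^ prt c j) j) := by
    intro c j; fun_prop
  have hd2 : ∀ c : Composition (n + 1), ∀ j : Fin (n + 1), Differentiable ℝ
      ((Function.update (fun (j : Fin (n + 1)) x => g x ^ prt c j) ρ
        (wE1 I (fun x => g x ^ prt c ρ))) j) := by
    intro c j
    by_cases h : j = ρ
    · subst h
      rw [Function.update_self]
      exact (wE1_contDiff I _ 2 (by exact_mod_cast hg.pow _)).differentiable (by norm_num)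
    · rw [Function.update_of_ne h]
      exact hd1 c j
  have hw : wE I ρ (fun z : Fin (n + 1) → ℂ => ∑ c : Composition (n + 1),
      Upsilon0 c * ∏ j : Fin (n + 1), ((f (z j) : ℂ)) ^ (prt c j)) =
      fun w => ∑ c : Composition (n + 1), Upsilon0 c *
        ∏ j, (Function.update (fun (j : Fin (n + 1)) x => g x ^ prt c j) ρ
        (wE1 I (fun x => g x ^ prt c ρ))) j (w j) := by
    rw [wE_sum I Upsilon0 (fun c z => ∏ j : Fin (n + 1), ((f (z j) : ℂ)) ^ (prt c j))
      (fun c => diff_prodFun _ (hd1 c))]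
    funext w
    apply Finset.sum_congr rfl
    intro c _
    congr 1
    exact congrFun (wE_prodFun I _ (hd1 c) ρ) w
  rw [hw, wE_sum (-I) Upsilon0 _ (fun c => diff_prodFun _ (hd2 c))]
  have hval : ∀ c : Composition (n + 1),
      Integrable (fun lam : ℂ => wE (-I) σ (fun w : Fin (n + 1) → ℂ =>
        ∏ j, (Function.update (fun (j : Fin (n + 1)) x => g x ^ prt c j) ρ
        (wE1 I (fun x => g x ^ prt c ρ))) j (w j)) (fun _ => lam)) dA ∧
      ∫ lam : ℂ, wE (-I) σ (fun w : Fin (n + 1) → ℂ =>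
        ∏ j, (Function.update (fun (j : Fin (n + 1)) x => g x ^ prt c j) ρ
        (wE1 I (fun x => g x ^ prt c ρ))) j (w j)) (fun _ => lam) ∂dA =
      coef c ρ σ * ∫ lam : ℂ, wE1 (-I) g lam * wE1 I g lam * g lam ^ (n - 1) ∂dA := by
    intro c
    rw [wE_prodFun (-I) _ (hd2 c) σ]
    by_cases h : ρ = σ
    · subst h
      simp_rw [second_diag g hg (fun j => prt c j) (prt_sum c) I (-I) ρ, show n + 1 - 2 = n - 1 by omega,
        show n + 1 - 1 = n by omega]
      refine ⟨(i1.const_mul _).add (i2.const_mul _), ?_⟩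
      rw [integral_add (i1.const_mul _) (i2.const_mul _), integral_const_mul, integral_const_mul]
      rw [hI, coef, if_pos rfl]
      push_cast
      ring
    · simp_rw [second_off g hg (fun j => prt c j) (prt_sum c) I (-I) ρ σ h]
      refine ⟨i1.const_mul _, ?_⟩
      rw [integral_const_mul, coef, if_neg (by simpa [Fin.ext_iff] using h)]
      rfl
  rw [integral_finsetSum _ (fun c _ => (hval c).1.const_mul _), Finset.sum_mul]
  apply Finset.sum_congr rfl
  intro c _
  rw [integral_const_mul, (hval c).2, mul_assoc]

lemma sum_coef (n : ℕ) (hn : 1 ≤ n) (c : Composition (n + 1)) :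
    ∑ σ : Fin (n + 1), ∑ ρ ∈ Finset.Icc 1 σ, coef c ρ σ =
      (∑ r ∈ Icc 2 c.length, ∑ s ∈ Icc (r + 1) c.length,
          compPart c r * compPart c s) +
        ∑ r ∈ Icc 2 c.length, compPart c r * (compPart c r - ((n + 1 : ℕ) : ℂ)) := by
  have hrhs : (∑ r ∈ Icc 2 c.length, ∑ s ∈ Icc (r + 1) c.length,
          compPart c r * compPart c s) +
        ∑ r ∈ Icc 2 c.length, compPart c r * (compPart c r - ((n + 1 : ℕ) : ℂ))
      = ∑ r ∈ Icc 2 c.length, ∑ s ∈ Icc r c.length, coef c (r - 1) (s - 1) := by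
    rw [← Finset.sum_add_distrib]
    apply Finset.sum_congr rfl
    intro r hr
    rw [Finset.mem_Icc] at hr
    rw [← Finset.add_sum_Ioc_eq_sum_Icc hr.2, add_comm]
    congr 1
    · simp [coef, compPart, prt]
    · apply Finset.sum_congr
      · ext x; simp [Finset.mem_Ioc, Nat.succ_le_iff]
      · intro s hs
        rw [Finset.mem_Ioc] at hs
        rw [coef, if_neg (by omega)]
        rfl
  rw [hrhs, Finset.sum_sigma', Finset.sum_sigma']
  have h1 : ((1 : Fin (n + 1)) : ℕ) = 1 := by
    rw [Fin.val_one']; exact Nat.mod_eq_of_lt (by omega)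
  have hlen := c.length_le
  symm
  refine Finset.sum_of_injOn
    (fun p : (Σ _ : ℕ, ℕ) => (⟨Fin.ofNat (n + 1) (p.2 - 1), Fin.ofNat (n + 1) (p.1 - 1)⟩ :
      Σ _ : Fin (n + 1), Fin (n + 1))) ?_ ?_ ?_ ?_
  · rintro ⟨r, s⟩ hp ⟨r', s'⟩ hp' heq
    simp only [Finset.coe_sigma, Set.mem_sigma_iff, Finset.mem_coe, Finset.mem_Icc] at hp hp'
    simp only [Sigma.mk.injEq, heq_eq_eq, Fin.ext_iff, Fin.val_ofNat] at heq
    rw [Nat.mod_eq_of_lt (by omega), Nat.mod_eq_of_lt (by omega), Nat.mod_eq_of_lt (by omega),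
      Nat.mod_eq_of_lt (by omega)] at heq
    have e1 : r = r' := by omega
    have e2 : s = s' := by omega
    rw [e1, e2]
  · rintro ⟨r, s⟩ hp
    simp only [Finset.coe_sigma, Set.mem_sigma_iff, Finset.mem_coe, Finset.mem_Icc] at hp
    simp only [Finset.coe_sigma, Set.mem_sigma_iff, Finset.mem_coe, Finset.mem_Icc,
      Fin.le_def, h1, Fin.val_ofNat, Finset.mem_univ, true_and]
    rw [Nat.mod_eq_of_lt (by omega), Nat.mod_eq_of_lt (by omega)]
    omega
  · rintro ⟨σ, ρ⟩ hp hnot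
    simp only [Finset.mem_sigma, Finset.mem_Icc, Fin.le_def, h1, Finset.mem_univ, true_and] at hp
    have hσ : c.length ≤ σ := by
      by_contra hlt
      push Not at hlt
      apply hnot
      refine ⟨⟨ρ + 1, σ + 1⟩, ?_, ?_⟩
      · simp only [Finset.coe_sigma, Set.mem_sigma_iff, Finset.mem_coe, Finset.mem_Icc]
        omega
      · simp
    by_cases h : (ρ : ℕ) = σ
    · simp [coef, h, prt_zero c σ hσ]
    · simp [coef, h, prt_zero c σ hσ]
  · rintro ⟨r, s⟩ hp
    simp only [Finset.mem_sigma, Finset.mem_Icc] at hp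
    simp only [Fin.val_ofNat]
    rw [Nat.mod_eq_of_lt (by omega), Nat.mod_eq_of_lt (by omega)]

/-- `Σ_{2 ≤ r ≤ s ≤ n+1} ∫_ℂ (∂_s ∂̄_r Υ₀^{n+1}[f])(λ, …, λ) dA(λ)
  = −𝒴_{n+1} ∫_ℂ ∂f(λ) ∂̄f(λ) f(λ)^{n−1} dA(λ)`.
The 1-based coordinates `r, s ∈ {2, …, n+1}` correspond to the 0-based coordinates
`ρ, σ ∈ {1, …, n}` of `Fin (n+1)` (with `ρ = r − 1 ≤ σ = s − 1`). -/
theorem upsilon_diagonal_derivative_sum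
    (f : ℂ → ℝ) (hf : ContDiff ℝ 3 f) (hsupp : HasCompactSupport f)
    (n : ℕ) (hn : 1 ≤ n) :
    (∑ σ : Fin (n + 1), ∑ ρ ∈ Finset.Icc 1 σ,
        ∫ lam : ℂ, wD σ (wDbar ρ (Upsilon0Fun f)) (fun _ => lam) ∂dA)
      = -Yval (n + 1) *
          ∫ lam : ℂ, wD1 (fun w => (f w : ℂ)) lam * wDbar1 (fun w => (f w : ℂ)) lam *
            (f lam : ℂ) ^ (n - 1) ∂dA := by
  simp_rw [integral_pair_ups f hf hsupp n hn, ← Finset.sum_mul]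
  congr 1
  rw [Yval, neg_neg]
  have : ∀ σ : Fin (n + 1), ∑ ρ ∈ Finset.Icc 1 σ, ∑ c : Composition (n + 1),
      Upsilon0 c * coef c ρ σ = ∑ c : Composition (n + 1), Upsilon0 c *
        ∑ ρ ∈ Finset.Icc 1 σ, coef c ρ σ := by
    intro σ
    rw [Finset.sum_comm]
    simp_rw [Finset.mul_sum]
  simp_rw [this]
  rw [Finset.sum_comm]
  apply Finset.sum_congr rfl
  intro c _
  rw [← Finset.mul_sum, sum_coef n hn c]
end
end
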